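/- Let m, n be integers with 3 ≤ m < n ≤ 2^m and let A be an orientation of the complete bipartite graph K_{m,n} having no pair of distinct full twin vertices in Y (so the arc-patterns p(y) : X → {0,1} of the vertices y in Y, where p(y)(x_j) = 0 if A x_j y and p(y)(x_j) = 1 if A y x_j, are pairwise distinct). If there exist two distinct vertices x_i, x_{i'} of X such that every pattern w : X → {0,1} that is NOT realized as p(y) for some y in Y satisfies w(x_i) = w(x_{i'}), then A is not rigid. Consequently, for every integer m ≥ 3 and every integer k with 0 ≤ k and 2^k < m, the complete bipartite graph K_{m, 2^m − k} admits no rigid orientation. -/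

import Mathlib

/-!
Suppose `A` is rigid. Swapping two vertices of `Y` with the same arc-pattern would be an
automorphism, so `Y` is identified with the set of realized patterns. A permutation `σ` of `X` acts
on all patterns by permuting coordinates; if it fixes every unrealized pattern, it permutes the
realized ones, hence acts on `Y`, and together with this action it is an automorphism of `A`.
Agreement of the unrealized patterns at `i` and `i'` says precisely that the transposition of `i`
and `i'` fixes them all. If at most `k` patterns are unrealized, they give each vertex of `X` one of
at most `2 ^ k` Boolean columns, so when `2 ^ k < m` two columns coincide.
-/

/-- An orientation of a graph with adjacency relation `Adj`: an asymmetric relation whose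
symmetric closure is exactly `Adj`. -/
def IsOrientation {V : Type*} (Adj : V → V → Prop) (A : V → V → Prop) : Prop :=
  (∀ u v, A u v → ¬ A v u) ∧ (∀ u v, (A u v ∨ A v u) ↔ Adj u v)

/-- An automorphism of an oriented graph `A`. -/
def IsAutom {V : Type*} (A : V → V → Prop) (φ : Equiv.Perm V) : Prop :=
  ∀ u v, A u v ↔ A (φ u) (φ v)

/-- An oriented graph is rigid if its only automorphism is the identity. -/
def IsRigid {V : Type*} (A : V → V → Prop) : Prop :=
  ∀ φ : Equiv.Perm V, IsAutom A φ → φ = 1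

/-- The adjacency relation of the complete bipartite graph `K_{m,n}`, with parts
`X = Fin m` (the left summand) and `Y = Fin n` (the right summand). -/
def bipAdj (m n : ℕ) (u v : Sum (Fin m) (Fin n)) : Prop :=
  u.isLeft ≠ v.isLeft

/-- The arc-pattern (as a Boolean word on `X`) of a vertex `y ∈ Y` in an orientation `A`
of `K_{m,n}`: position `x` is `true` exactly when the edge is oriented from `y` to `x`.
A pattern `w : Fin m → Bool` is realized in `A` if it is the pattern of some `y ∈ Y`. -/
def IsRealizedPattern {m n : ℕ}
    (A : Sum (Fin m) (Fin n) → Sum (Fin m) (Fin n) → Prop) (w : Fin m → Bool) : Prop :=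
  ∃ j : Fin n, ∀ x : Fin m, (w x = true ↔ A (Sum.inr j) (Sum.inl x))

theorem exists_perm_forall_apply_eq {α β : Type*} {f : α → β} (hf : f.Injective)
    (g : Equiv.Perm β) (hg : ∀ b ∉ Set.range f, g b = b) :
    ∃ τ : Equiv.Perm α, ∀ a, f (τ a) = g (f a) := by
  have apply_mem_range (b : β) : g b ∈ Set.range f ↔ b ∈ Set.range f := by
    refine ⟨fun h ↦ ?_, fun h ↦ ?_⟩ <;> by_contra hb
    · exact hb (hg b hb ▸ h)
    · exact hb (by rwa [g.injective (hg _ hb)])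
  let e := Equiv.ofInjective f hf
  exact ⟨(e.trans (g.subtypePerm apply_mem_range)).trans e.symm,
    fun a ↦ Equiv.apply_ofInjective_symm hf _⟩

theorem exists_ne_forall_mem_apply_eq_of_card_pow_lt {ι α : Type*} [Fintype ι] [Fintype α]
    {s : Finset (ι → α)} (hs : Fintype.card α ^ s.card < Fintype.card ι) :
    ∃ i i', i ≠ i' ∧ ∀ w ∈ s, w i = w i' := by
  classical
  have card_lt : Fintype.card (s → α) < Fintype.card ι := by simpa using hs
  obtain ⟨i, i', hne, heq⟩ :=
    Fintype.exists_ne_map_eq_of_card_lt (fun i (w : s) ↦ w.1 i) card_lt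
  exact ⟨i, i', hne, fun w hw ↦ congrFun heq ⟨w, hw⟩⟩

theorem exists_ne_forall_notMem_range_apply_eq {ι κ α : Type*} [Fintype ι] [Fintype κ] [Fintype α]
    [Nonempty α] {p : κ → ι → α} (hp : p.Injective) {k : ℕ}
    (hk : Fintype.card α ^ Fintype.card ι ≤ Fintype.card κ + k)
    (hkι : Fintype.card α ^ k < Fintype.card ι) :
    ∃ i i', i ≠ i' ∧ ∀ w ∉ Set.range p, w i = w i' := by
  classical
  let missed : Finset (ι → α) := (Finset.univ.image p)ᶜ
  have card_missed_le : missed.card ≤ k := by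
    rw [Finset.card_compl, Finset.card_image_of_injective _ hp, Finset.card_univ, Fintype.card_fun]
    exact Nat.sub_le_iff_le_add'.2 hk
  have card_columns_lt : Fintype.card α ^ missed.card < Fintype.card ι :=
    (Nat.pow_le_pow_right Fintype.card_pos card_missed_le).trans_lt hkι
  obtain ⟨i, i', hne, h⟩ := exists_ne_forall_mem_apply_eq_of_card_pow_lt card_columns_lt
  exact ⟨i, i', hne, fun w hw ↦ h w (by simpa [missed] using hw)⟩

section Orientation

variable {V : Type*} {Adj A : V → V → Prop} {u v : V}

theorem IsOrientation.not_of_not_adj (hA : IsOrientation Adj A) (h : ¬ Adj u v) : ¬ A u v :=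
  fun huv ↦ h ((hA.2 u v).1 (Or.inl huv))

theorem IsOrientation.iff_not_of_adj (hA : IsOrientation Adj A) (h : Adj u v) :
    A u v ↔ ¬ A v u :=
  ⟨hA.1 u v, ((hA.2 u v).2 h).resolve_right⟩

end Orientation

section Bipartite

variable {X Y : Type*} {A : X ⊕ Y → X ⊕ Y → Prop}

open Classical in
/-- The arc-pattern `p(y)` of a vertex `y` in the right part of a bipartite orientation, as a
Boolean word on the left part: `true` at `x` when the edge is oriented from `y` to `x`. -/
noncomputable def arcPattern (A : X ⊕ Y → X ⊕ Y → Prop) (y : Y) : X → Bool :=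
  fun x ↦ decide (A (Sum.inr y) (Sum.inl x))

theorem arcPattern_apply_eq_true {x : X} {y : Y} :
    arcPattern A y x = true ↔ A (Sum.inr y) (Sum.inl x) := by
  simp [arcPattern]

theorem IsOrientation.isAutom_sumCongr
    (hA : IsOrientation (completeBipartiteGraph X Y).Adj A) {σ : Equiv.Perm X} {τ : Equiv.Perm Y}
    (h : ∀ y, arcPattern A (τ y) ∘ σ = arcPattern A y) :
    IsAutom A (Equiv.Perm.sumCongr σ τ) := by
  have arc_iff (y : Y) (x : X) :
      A (Sum.inr y) (Sum.inl x) ↔ A (Sum.inr (τ y)) (Sum.inl (σ x)) := by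
    simp only [← arcPattern_apply_eq_true, ← h y, Function.comp_apply]
  rintro (x | y) (x' | y') <;> simp only [Equiv.Perm.sumCongr_apply, Sum.map_inl, Sum.map_inr]
  · exact iff_of_false (hA.not_of_not_adj (by simp)) (hA.not_of_not_adj (by simp))
  · calc A (Sum.inl x) (Sum.inr y')
        ↔ ¬ A (Sum.inr y') (Sum.inl x) := hA.iff_not_of_adj (by simp)
      _ ↔ ¬ A (Sum.inr (τ y')) (Sum.inl (σ x)) := (arc_iff y' x).not
      _ ↔ A (Sum.inl (σ x)) (Sum.inr (τ y')) := (hA.iff_not_of_adj (by simp)).symm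
  · exact arc_iff y x'
  · exact iff_of_false (hA.not_of_not_adj (by simp)) (hA.not_of_not_adj (by simp))

theorem IsRigid.arcPattern_injective (hR : IsRigid A)
    (hA : IsOrientation (completeBipartiteGraph X Y).Adj A) : (arcPattern A).Injective := by
  classical
  intro y y' hyy'
  have isAutom_swap : IsAutom A (Equiv.Perm.sumCongr 1 (Equiv.swap y y')) :=
    hA.isAutom_sumCongr fun z ↦ Equiv.apply_swap_eq_self hyy' z
  have swap_eq_one := hR _ isAutom_swap
  rw [Equiv.Perm.sumCongr_one_swap, Equiv.swap_eq_one_iff] at swap_eq_one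
  exact Sum.inr_injective swap_eq_one

theorem IsOrientation.exists_isAutom_sumCongr
    (hA : IsOrientation (completeBipartiteGraph X Y).Adj A) (hinj : (arcPattern A).Injective)
    {σ : Equiv.Perm X} (hσ : ∀ w ∉ Set.range (arcPattern A), w ∘ σ = w) :
    ∃ τ : Equiv.Perm Y, IsAutom A (Equiv.Perm.sumCongr σ τ) := by
  let precomp : Equiv.Perm (X → Bool) := σ.arrowCongr (Equiv.refl Bool)
  have precomp_comp (w : X → Bool) : precomp w ∘ σ = w := by
    ext x
    simp [precomp]
  have precomp_eq_self : ∀ w ∉ Set.range (arcPattern A), precomp w = w := fun w hw ↦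
    σ.surjective.injective_comp_right ((precomp_comp w).trans (hσ w hw).symm)
  obtain ⟨τ, hτ⟩ := exists_perm_forall_apply_eq hinj precomp precomp_eq_self
  exact ⟨τ, hA.isAutom_sumCongr fun y ↦ by rw [hτ, precomp_comp]⟩

theorem IsRigid.eq_one_of_forall_comp_eq (hR : IsRigid A)
    (hA : IsOrientation (completeBipartiteGraph X Y).Adj A) {σ : Equiv.Perm X}
    (hσ : ∀ w ∉ Set.range (arcPattern A), w ∘ σ = w) : σ = 1 := by
  obtain ⟨τ, hτ⟩ := hA.exists_isAutom_sumCongr (hR.arcPattern_injective hA) hσ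
  ext x
  exact Sum.inl_injective (Equiv.congr_fun (hR _ hτ) (Sum.inl x))

theorem IsRigid.eq_of_forall_apply_eq (hR : IsRigid A)
    (hA : IsOrientation (completeBipartiteGraph X Y).Adj A) {i i' : X}
    (h : ∀ w ∉ Set.range (arcPattern A), w i = w i') : i = i' := by
  classical
  exact Equiv.swap_eq_one_iff.1 <|
    hR.eq_one_of_forall_comp_eq hA fun w hw ↦ funext (Equiv.apply_swap_eq_self (h w hw))

theorem two_identical_columns_not_rigid_general
    (hA : IsOrientation (completeBipartiteGraph X Y).Adj A) :
    ((∃ i i', i ≠ i' ∧ ∀ w ∉ Set.range (arcPattern A), w i = w i') → ¬ IsRigid A) ∧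
    (∀ [Fintype X] [Fintype Y] (k : ℕ), 2 ^ Fintype.card X ≤ Fintype.card Y + k →
      2 ^ k < Fintype.card X → ¬ IsRigid A) := by
  have not_isRigid : (∃ i i', i ≠ i' ∧ ∀ w ∉ Set.range (arcPattern A), w i = w i') →
      ¬ IsRigid A :=
    fun ⟨_, _, hne, h⟩ hR ↦ hne (hR.eq_of_forall_apply_eq hA h)
  exact ⟨not_isRigid, fun _ hk hkX hR ↦ not_isRigid
    (exists_ne_forall_notMem_range_apply_eq (hR.arcPattern_injective hA) hk hkX) hR⟩

end Bipartite

theorem bipAdj_eq_adj_completeBipartiteGraph (m n : ℕ) :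
    bipAdj m n = (completeBipartiteGraph (Fin m) (Fin n)).Adj := by
  ext (x | y) (x' | y') <;> simp [bipAdj]

theorem isRealizedPattern_iff_mem_range_arcPattern {m n : ℕ}
    {A : Fin m ⊕ Fin n → Fin m ⊕ Fin n → Prop} {w : Fin m → Bool} :
    IsRealizedPattern A w ↔ w ∈ Set.range (arcPattern A) :=
  exists_congr fun j ↦ by
    rw [eq_comm, funext_iff]
    exact forall_congr' fun x ↦
      (iff_congr Iff.rfl arcPattern_apply_eq_true.symm).trans Bool.coe_iff_coe

/-- (i) Let `3 ≤ m < n ≤ 2^m` and let `A` be an orientation of `K_{m,n}` with no pair of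
distinct full twins in `Y`. If there are two distinct vertices `x_i, x_{i'}` of `X` such
that every non-realized pattern `w` agrees on `x_i` and `x_{i'}`, then `A` is not rigid.
(ii) Consequently, for every `m ≥ 3` and every `k` with `2^k < m`, the complete
bipartite graph `K_{m, 2^m - k}` admits no rigid orientation. -/
theorem two_identical_columns_not_rigid :
    (∀ m n : ℕ, 3 ≤ m → m < n → n ≤ 2 ^ m →
      ∀ A : Sum (Fin m) (Fin n) → Sum (Fin m) (Fin n) → Prop,
        IsOrientation (bipAdj m n) A →
        (∀ j j' : Fin n, j ≠ j' → ¬ (∀ w, A (Sum.inr j) w ↔ A (Sum.inr j') w)) →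
        (∃ i i' : Fin m, i ≠ i' ∧
          ∀ w : Fin m → Bool, ¬ IsRealizedPattern A w → w i = w i') →
        ¬ IsRigid A) ∧
    (∀ m k : ℕ, 3 ≤ m → 2 ^ k < m →
      ∀ A : Sum (Fin m) (Fin (2 ^ m - k)) → Sum (Fin m) (Fin (2 ^ m - k)) → Prop,
        IsOrientation (bipAdj m (2 ^ m - k)) A → ¬ IsRigid A) := by
  simp only [bipAdj_eq_adj_completeBipartiteGraph, isRealizedPattern_iff_mem_range_arcPattern]
  exact ⟨fun _ _ _ _ _ _ hA _ ↦ (two_identical_columns_not_rigid_general hA).1,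
    fun m k _ hk _ hA ↦ (two_identical_columns_not_rigid_general hA).2 k
      (by simpa using le_tsub_add) (by simpa using hk)⟩
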